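/- Asymptotically, diam(k) = 2 + Θ(1/k^{2/3}): there exist constants c₁, c₂ > 0 and an integer k₀ such that for all integers k ≥ k₀, 2 + c₁·k^{-2/3} ≤ diam(k) ≤ 2 + c₂·k^{-2/3}. -/

import Mathlib

open Real MeasureTheory

/-- Arc distance between points on the unit circle, given by their polar angles:
the length of the shorter arc between them. -/
noncomputable def arcDist (p q : ℝ) : ℝ := ⨅ n : ℤ, |p - q + 2 * π * n|

/-- Euclidean length of the chord between the circle points with angles `u` and `v`. -/
noncomputable def chordLen (u v : ℝ) : ℝ := 2 * Real.sin (arcDist u v / 2)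

/-- A pair of angles is a genuine shortcut (chord) if its endpoints are distinct points. -/
def IsShortcut (s : ℝ × ℝ) : Prop := arcDist s.1 s.2 ≠ 0

/-- δ(a) = arcsin(a/2) - a/2. -/
noncomputable def sdelta (a : ℝ) : ℝ := Real.arcsin (a / 2) - a / 2

/-- Cost of a path that starts at `p`, fully traverses the listed chords in order
(travelling along the circle in between), and ends at `q`. -/
noncomputable def walkCost (q : ℝ) : ℝ → List (ℝ × ℝ) → ℝ
  | p, [] => arcDist p q
  | p, e :: L => arcDist p e.1 + chordLen e.1 e.2 + walkCost q e.2 L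

/-- Shortest-path distance from `p` to `q` using the shortcuts of `S`
(each usable in either orientation, and always traversed completely). -/
noncomputable def dS (S : Finset (ℝ × ℝ)) (p q : ℝ) : ℝ :=
  sInf {c | ∃ L : List (ℝ × ℝ), (∀ e ∈ L, e ∈ S ∨ (e.2, e.1) ∈ S) ∧ c = walkCost q p L}

/-- Diameter of the circle augmented with the shortcuts of `S`. -/
noncomputable def diamS (S : Finset (ℝ × ℝ)) : ℝ :=
  sSup {d | ∃ p q : ℝ, d = dS S p q}

/-- diam(k): the optimal diameter achievable with `k` shortcuts. -/
noncomputable def diamK (k : ℕ) : ℝ :=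
  sInf {d | ∃ S : Finset (ℝ × ℝ), S.card = k ∧ (∀ s ∈ S, IsShortcut s) ∧ d = diamS S}

/-- Distance from `p` to `q` when a single shortcut with endpoints `u`, `v` is available. -/
noncomputable def dOne (u v p q : ℝ) : ℝ :=
  min (arcDist p q)
    (min (arcDist p u + chordLen u v + arcDist v q)
      (arcDist p v + chordLen u v + arcDist u q))

/-- Two angles represent the same point of the circle. -/
def SamePoint (p q : ℝ) : Prop := arcDist p q = 0

/-- Two pairs of angles represent the same chord of the circle. -/
def SameChord (s t : ℝ × ℝ) : Prop :=
  (SamePoint s.1 t.1 ∧ SamePoint s.2 t.2) ∨ (SamePoint s.1 t.2 ∧ SamePoint s.2 t.1)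

/-- `p` lies in the deep umbra of the shortcut from `u` to `u + β`
(where `0 < β ≤ π` is the counterclockwise arc spanned by the shortcut):
`p` lies in the inner umbra, and `|p u'| + |s| ≥ d(p, v')` where `u'` is the
endpoint closer to `p` and `v'` the other one. -/
def InDeepUmbra (u β p : ℝ) : Prop :=
  (∃ t : ℝ, sdelta (chordLen u (u + β)) ≤ t ∧ t ≤ β - sdelta (chordLen u (u + β)) ∧
    arcDist p (u + t) = 0) ∧
  (arcDist p u ≤ arcDist p (u + β) →
    arcDist p (u + β) ≤ chordLen p u + chordLen u (u + β)) ∧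
  (arcDist p (u + β) ≤ arcDist p u →
    arcDist p u ≤ chordLen p (u + β) + chordLen u (u + β))

/-- `d` equals δ*_k : for `k ∈ {3,4,5}` this is `δ(a*_k)` where `a*_k + δ(a*_k) = (k-1)π/k`,
and for `k = 6` it is `δ(2) = π/2 - 1`. -/
def dstarSpec (k : ℕ) (d : ℝ) : Prop :=
  (k = 6 ∧ d = sdelta 2) ∨
    (∃ a, a ∈ Set.Icc (0 : ℝ) 2 ∧ a + sdelta a = ((k : ℝ) - 1) * π / k ∧ d = sdelta a)

theorem ad_le (p q : ℝ) (n : ℤ) : arcDist p q ≤ |p - q + 2 * π * n| := by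
  unfold arcDist
  exact ciInf_le ⟨0, by rintro _ ⟨n, rfl⟩; positivity⟩ n

theorem ad_le_abs (p q : ℝ) : arcDist p q ≤ |p - q| := by
  simpa using ad_le p q 0

theorem ad_exists (p q : ℝ) : ∃ n : ℤ, arcDist p q = |p - q + 2 * π * n| ∧ arcDist p q ≤ π := by
  have hpi := Real.pi_pos
  have key : ∀ n : ℤ, |p - q + 2 * π * n| = 2 * π * |(p - q) / (2 * π) - ((-n : ℤ) : ℝ)| := by
    intro n
    rw [← abs_of_pos (show (0:ℝ) < 2 * π by positivity), ← abs_mul, abs_of_pos (show (0:ℝ) < 2 * π by positivity)]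
    congr 1
    push_cast
    field_simp
    ring
  have hb := abs_sub_round ((p - q) / (2 * π))
  refine ⟨-round ((p - q) / (2 * π)), ?_, ?_⟩
  · apply le_antisymm (ad_le _ _ _)
    unfold arcDist
    apply le_ciInf
    intro n
    rw [key, key, neg_neg]
    refine mul_le_mul_of_nonneg_left ?_ (by positivity)
    exact round_le ((p - q) / (2 * π)) (-n)
  · refine (ad_le _ _ (-round ((p - q) / (2 * π)))).trans ?_
    rw [key, neg_neg]
    nlinarith

theorem ad_nonneg (p q : ℝ) : 0 ≤ arcDist p q := by
  obtain ⟨n, h, -⟩ := ad_exists p q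
  rw [h]; positivity

theorem ad_le_pi (p q : ℝ) : arcDist p q ≤ π := by
  obtain ⟨n, -, h⟩ := ad_exists p q
  exact h

theorem ad_comm (p q : ℝ) : arcDist p q = arcDist q p := by
  have : ∀ p q, arcDist p q ≤ arcDist q p := by
    intro p q
    obtain ⟨n, h, -⟩ := ad_exists q p
    rw [h, ← abs_neg]
    convert ad_le p q (-n) using 2
    push_cast; ring
  exact le_antisymm (this _ _) (this _ _)

theorem cl_eq (u v : ℝ) : chordLen u v = 2 * |Real.sin ((u - v) / 2)| := by
  obtain ⟨n, h, h2⟩ := ad_exists u v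
  have h0 := ad_nonneg u v
  unfold chordLen
  have h3 : 0 ≤ Real.sin (arcDist u v / 2) :=
    Real.sin_nonneg_of_nonneg_of_le_pi (by linarith) (by linarith [Real.pi_pos])
  rw [← abs_of_nonneg h3, h]
  have h4 : ∀ y : ℝ, |Real.sin (|y| / 2)| = |Real.sin (y / 2)| := by
    intro y
    rcases abs_cases y with ⟨h, -⟩ | ⟨h, -⟩
    · rw [h]
    · rw [h, neg_div, Real.sin_neg, abs_neg]
  rw [h4, show (u - v + 2 * π * n) / 2 = (u - v) / 2 + n * π by ring, Real.sin_add_int_mul_pi,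
    abs_mul, abs_zpow, abs_neg, abs_one, one_zpow, one_mul]

theorem cl_comm (u v : ℝ) : chordLen u v = chordLen v u := by
  unfold chordLen; rw [ad_comm]

theorem cl_nonneg (u v : ℝ) : 0 ≤ chordLen u v := by
  rw [cl_eq]; positivity

theorem cl_le_ad (u v : ℝ) : chordLen u v ≤ arcDist u v := by
  have := Real.sin_le (x := arcDist u v / 2) (by linarith [ad_nonneg u v])
  unfold chordLen; linarith

theorem cl_triangle (u v w : ℝ) : chordLen u w ≤ chordLen u v + chordLen v w := by
  rw [cl_eq, cl_eq, cl_eq, show (u - w) / 2 = (u - v) / 2 + (v - w) / 2 by ring, Real.sin_add]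
  have h1 := abs_add_le (Real.sin ((u - v) / 2) * Real.cos ((v - w) / 2))
    (Real.cos ((u - v) / 2) * Real.sin ((v - w) / 2))
  rw [abs_mul, abs_mul] at h1
  have h2 := Real.abs_cos_le_one ((v - w) / 2)
  have h3 := Real.abs_cos_le_one ((u - v) / 2)
  have h4 := abs_nonneg (Real.sin ((u - v) / 2))
  have h5 := abs_nonneg (Real.sin ((v - w) / 2))
  nlinarith

theorem wc_ge (q : ℝ) (L : List (ℝ × ℝ)) : ∀ p, chordLen p q ≤ walkCost q p L := by
  induction L with
  | nil => intro p; exact cl_le_ad p q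
  | cons e L ih =>
    intro p
    have h1 := ih e.2
    have h2 := cl_le_ad p e.1
    have h3 := cl_triangle p e.1 q
    have h4 := cl_triangle e.1 e.2 q
    simp only [walkCost]; linarith

theorem wc_nonneg (q p : ℝ) (L : List (ℝ × ℝ)) : 0 ≤ walkCost q p L :=
  (cl_nonneg p q).trans (wc_ge q L p)

theorem dS_bdd (S : Finset (ℝ × ℝ)) (p q : ℝ) : BddBelow
    {c | ∃ L : List (ℝ × ℝ), (∀ e ∈ L, e ∈ S ∨ (e.2, e.1) ∈ S) ∧ c = walkCost q p L} :=
  ⟨0, by rintro _ ⟨L, -, rfl⟩; exact wc_nonneg _ _ _⟩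

theorem dS_le (S : Finset (ℝ × ℝ)) (p q : ℝ) (L : List (ℝ × ℝ))
    (h : ∀ e ∈ L, e ∈ S ∨ (e.2, e.1) ∈ S) : dS S p q ≤ walkCost q p L :=
  csInf_le (dS_bdd S p q) ⟨L, h, rfl⟩

theorem dS_nonneg (S : Finset (ℝ × ℝ)) (p q : ℝ) : 0 ≤ dS S p q := by
  apply Real.sInf_nonneg
  rintro _ ⟨L, -, rfl⟩; exact wc_nonneg _ _ _

theorem dS_le_ad (S : Finset (ℝ × ℝ)) (p q : ℝ) : dS S p q ≤ arcDist p q := by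
  simpa [walkCost] using dS_le S p q [] (by simp)

theorem diamS_nonneg (S : Finset (ℝ × ℝ)) : 0 ≤ diamS S := by
  apply Real.sSup_nonneg
  rintro _ ⟨p, q, rfl⟩; exact dS_nonneg _ _ _

theorem dS_le_diamS (S : Finset (ℝ × ℝ)) (p q : ℝ) : dS S p q ≤ diamS S := by
  apply le_csSup
  · refine ⟨π, ?_⟩
    rintro _ ⟨p, q, rfl⟩
    exact (dS_le_ad S p q).trans (ad_le_pi p q)
  · exact ⟨p, q, rfl⟩

/-- A point on a path of length about `2` between almost antipodal points is close to one end. -/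
theorem dichotomy (p q c ε : ℝ) (h0 : 0 < ε) (h1 : ε ≤ 1 / 1000) (hD : 2 - ε ≤ chordLen p q)
    (h : chordLen p c + chordLen c q < 2 + ε) :
    chordLen p c ≤ 9 * ε ∨ chordLen c q ≤ 9 * ε := by
  have ht := cl_triangle p c q
  rw [cl_eq, cl_eq] at h
  rw [cl_eq p q] at hD
  rw [cl_eq p q, cl_eq p c, cl_eq c q] at ht
  rw [cl_eq, cl_eq]
  rw [show (p - q) / 2 = (p - c) / 2 + (c - q) / 2 by ring] at hD ht
  generalize (p - c) / 2 = α at *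
  generalize (c - q) / 2 = β at *
  have e1 : Real.sin (α + β) ^ 2 = Real.sin α ^ 2 + Real.sin β ^ 2
      + 2 * Real.sin α * Real.sin β * Real.cos (α + β) := by
    rw [Real.sin_add, Real.cos_add]
    have := Real.sin_sq_add_cos_sq α
    have := Real.sin_sq_add_cos_sq β
    have ha : Real.cos α ^ 2 = 1 - Real.sin α ^ 2 := by linarith
    have hb : Real.cos β ^ 2 = 1 - Real.sin β ^ 2 := by linarith
    ring_nf
    rw [ha, hb]; ring
  have e2 := Real.sin_sq_add_cos_sq (α + β)
  have hab : Real.sin α * Real.sin β * Real.cos (α + β)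
      ≤ |Real.sin α| * |Real.sin β| * |Real.cos (α + β)| := by
    rw [← abs_mul, ← abs_mul]; exact le_abs_self _
  rw [← sq_abs (Real.sin (α + β))] at e1 e2
  rw [← sq_abs (Real.cos (α + β))] at e2
  rw [← sq_abs (Real.sin α), ← sq_abs (Real.sin β)] at e1
  have pa := abs_nonneg (Real.sin α)
  have pb := abs_nonneg (Real.sin β)
  have pc := abs_nonneg (Real.cos (α + β))
  generalize |Real.sin α| = a at *
  generalize |Real.sin β| = b at *
  generalize |Real.sin (α + β)| = s at *
  generalize |Real.cos (α + β)| = t at *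
  have ht2 : t ≤ 1 / 2 := by nlinarith
  have hab2 : a * b * t ≤ a * b * (1 / 2) := by gcongr
  have hk : a * b ≤ (a + b) ^ 2 - s ^ 2 := by nlinarith
  have hk2 : a * b ≤ 2 * ε := by nlinarith
  rcases le_total a b with hle | hle
  · left
    have : 0.49 ≤ b := by linarith
    nlinarith
  · right
    have : 0.49 ≤ a := by linarith
    nlinarith

theorem ad_big (c q : ℝ) (h : 1.97 ≤ chordLen c q) : 2.5 ≤ arcDist c q := by
  by_contra hc
  push Not at hc
  have h1 := Real.cos_le_one_sub_mul_cos_sq (x := π / 2 - arcDist c q / 2) (by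
    rw [abs_le]; constructor <;> linarith [ad_nonneg c q, ad_le_pi c q, Real.pi_pos])
  rw [Real.cos_pi_div_two_sub] at h1
  unfold chordLen at h
  have h2 := Real.pi_gt_d2
  have h3 := Real.pi_lt_d2
  have h4 : 0.32 ≤ π / 2 - arcDist c q / 2 := by linarith
  have h5 : 0.2 ≤ 2 / π ^ 2 := by
    rw [le_div_iff₀ (by positivity)]; nlinarith
  have h6 : 0.2 * 0.32 ^ 2 ≤ 2 / π ^ 2 * (π / 2 - arcDist c q / 2) ^ 2 := by gcongr
  norm_num at h6 h
  linarith

theorem walk_edge (p q ε : ℝ) (h0 : 0 < ε) (h1 : ε ≤ 1 / 1000) (hD : 2 - ε ≤ chordLen p q)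
    (L : List (ℝ × ℝ)) : ∀ c A, chordLen p c ≤ A → chordLen p c ≤ 9 * ε →
    A + walkCost q c L < 2 + ε →
    ∃ e ∈ L, chordLen p e.1 ≤ 9 * ε ∧ chordLen e.2 q ≤ 9 * ε := by
  induction L with
  | nil =>
    intro c A hA hc h
    simp only [walkCost] at h
    have h2 := cl_triangle p c q
    have h3 := ad_big c q (by norm_num; linarith)
    norm_num at h3
    linarith [cl_nonneg p c]
  | cons e L ih =>
    intro c A hA hc h
    simp only [walkCost] at h
    have a1 := cl_le_ad c e.1
    have a2 := cl_triangle p c e.1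
    have a3 := cl_triangle p e.1 e.2
    have a4 := cl_triangle e.1 e.2 q
    have a5 := wc_ge q L e.2
    have n1 := cl_nonneg p c
    have n2 := cl_nonneg e.1 e.2
    have hA' : chordLen p e.2 ≤ A + arcDist c e.1 + chordLen e.1 e.2 := by linarith
    have hn1 : chordLen p e.1 ≤ 9 * ε := by
      rcases dichotomy p q e.1 ε h0 h1 hD (by linarith) with h' | h'
      · exact h'
      · exfalso
        have b1 := cl_triangle p c q
        have b2 := cl_triangle c e.1 q
        have b3 := ad_big c e.1 (by norm_num; linarith)
        norm_num at b3
        linarith [cl_nonneg e.2 q]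
    rcases dichotomy p q e.2 ε h0 h1 hD (by linarith) with h' | h'
    · obtain ⟨e', he', h''⟩ := ih e.2 _ hA' h' (by linarith)
      exact ⟨e', by simp [he'], h''⟩
    · exact ⟨e, by simp, hn1, h'⟩

theorem diam_edge (S : Finset (ℝ × ℝ)) (p q ε : ℝ) (h0 : 0 < ε) (h1 : ε ≤ 1 / 1000)
    (hD : 2 - ε ≤ chordLen p q) (hS : diamS S < 2 + ε) :
    ∃ e ∈ S ∪ S.image Prod.swap, chordLen p e.1 ≤ 9 * ε ∧ chordLen e.2 q ≤ 9 * ε := by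
  have h := (dS_le_diamS S p q).trans_lt hS
  unfold dS at h
  have hne : {c | ∃ L : List (ℝ × ℝ),
      (∀ e ∈ L, e ∈ S ∨ (e.2, e.1) ∈ S) ∧ c = walkCost q p L}.Nonempty :=
    ⟨walkCost q p [], [], by simp, rfl⟩
  obtain ⟨_, ⟨L, hL, rfl⟩, h⟩ := exists_lt_of_csInf_lt hne h
  have hpp : chordLen p p = 0 := by rw [cl_eq]; simp
  obtain ⟨e, he, h'⟩ := walk_edge p q ε h0 h1 hD L p 0 hpp.le (by rw [hpp]; positivity)
    (by linarith)
  refine ⟨e, ?_, h'⟩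
  rw [Finset.mem_union, Finset.mem_image]
  rcases hL e he with h | h
  · exact Or.inl h
  · exact Or.inr ⟨_, h, rfl⟩

theorem cl_sep (u v h : ℝ) (h0 : 0 < h) (h1 : h ≤ |u - v|) (h2 : |u - v| ≤ 1) :
    h / 2 < chordLen u v := by
  rw [cl_eq]
  have h3 := Real.mul_le_sin (x := |u - v| / 2) (by positivity) (by linarith [Real.pi_gt_three])
  have h4 : |Real.sin ((u - v) / 2)| = |Real.sin (|u - v| / 2)| := by
    rcases abs_cases (u - v) with ⟨h, -⟩ | ⟨h, -⟩
    · rw [h]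
    · rw [h, neg_div, Real.sin_neg, abs_neg]
  have h5 := le_abs_self (Real.sin (|u - v| / 2))
  rw [← h4] at h5
  have h6 : 0.5 < 2 / π := by
    rw [lt_div_iff₀ Real.pi_pos]; linarith [Real.pi_lt_d2]
  norm_num at h6
  nlinarith

theorem grid_sep (m : ℕ) (i j : ℕ) (hi : i < m ^ 2) (hj : j < m ^ 2) (h : ℝ)
    (hh : h = 1 / (36 * (m : ℝ) ^ 2)) (hne : i ≠ j) :
    h ≤ |(i * h - j * h)| ∧ |(i * h - j * h)| ≤ 1 := by
  have hm : 0 < (m : ℝ) ^ 2 := by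
    have : 0 < m ^ 2 := by omega
    exact_mod_cast this
  have h0 : 0 < h := by rw [hh]; positivity
  have h1 : (m : ℝ) ^ 2 * h ≤ 1 := by
    rw [hh, mul_one_div, div_le_one (by positivity)]; linarith
  rw [← sub_mul, abs_mul, abs_of_pos h0]
  have e1 : (1 : ℝ) ≤ |(i : ℝ) - j| := by
    have : (1 : ℤ) ≤ |(i : ℤ) - j| := Int.one_le_abs (by omega)
    exact_mod_cast this
  have e2 : |(i : ℝ) - j| ≤ (m : ℝ) ^ 2 := by
    have a1 : (i : ℝ) < (m : ℝ) ^ 2 := by exact_mod_cast hi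
    have a2 : (j : ℝ) < (m : ℝ) ^ 2 := by exact_mod_cast hj
    have a3 : (0 : ℝ) ≤ i := by positivity
    have a4 : (0 : ℝ) ≤ j := by positivity
    rw [abs_le]; constructor <;> linarith
  constructor <;> nlinarith

theorem lower (S : Finset (ℝ × ℝ)) (m : ℕ) (hm : 2 * S.card < m ^ 3) :
    2 + 1 / (1296 * (m : ℝ) ^ 2) ≤ diamS S := by
  by_contra hS
  push Not at hS
  have hm1 : 1 ≤ m := by
    rcases Nat.eq_zero_or_pos m with h | h
    · simp [h] at hm
    · exact h
  have hmR : (1 : ℝ) ≤ m := by exact_mod_cast hm1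
  have hm2 : (1 : ℝ) ≤ (m : ℝ) ^ 2 := by nlinarith
  set ε : ℝ := 1 / (1296 * (m : ℝ) ^ 2) with hε
  set h : ℝ := 1 / (36 * (m : ℝ) ^ 2) with hh
  have hhε : h = 36 * ε := by rw [hh, hε]; field_simp; norm_num
  have hε0 : 0 < ε := by positivity
  have hε1 : ε ≤ 1 / 1000 := by
    rw [hε]; apply one_div_le_one_div_of_le <;> linarith
  have hh0 : 0 < h := by positivity
  have key : ∀ ij : ℕ × ℕ, ∃ e : ℝ × ℝ, ij ∈ Finset.range (m ^ 2) ×ˢ Finset.range m →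
      e ∈ S ∪ S.image Prod.swap ∧ chordLen (ij.1 * h) e.1 ≤ 9 * ε ∧
        chordLen e.2 (ij.1 * h + π - ij.2 * h) ≤ 9 * ε := by
    rintro ⟨i, j⟩
    by_cases hij : (i, j) ∈ Finset.range (m ^ 2) ×ˢ Finset.range m
    · rw [Finset.mem_product, Finset.mem_range, Finset.mem_range] at hij
      simp only at hij
      have hjm : (j : ℝ) ≤ m := by exact_mod_cast hij.2.le
      have hx : (j * h) ^ 2 ≤ ε := by
        have : (j * h) ^ 2 ≤ (m * h) ^ 2 := by gcongr
        refine this.trans (le_of_eq ?_)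
        rw [hh, hε]; field_simp; norm_num
      have hD : 2 - ε ≤ chordLen (i * h) (i * h + π - j * h) := by
        rw [cl_eq, show ((i * h) - (i * h + π - j * h)) / 2 = -(π / 2 - (j * h) / 2) by ring,
          Real.sin_neg, abs_neg, Real.sin_pi_div_two_sub]
        have := Real.one_sub_sq_div_two_le_cos (x := j * h / 2)
        have := le_abs_self (Real.cos (j * h / 2))
        nlinarith
      obtain ⟨e, h1, h2⟩ := diam_edge S _ _ ε hε0 hε1 hD hS
      exact ⟨e, fun _ => ⟨h1, h2⟩⟩
    · exact ⟨0, fun h => absurd h hij⟩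
  choose f hf using key
  have hcard : (S ∪ S.image Prod.swap).card
      < (Finset.range (m ^ 2) ×ˢ Finset.range m).card := by
    have h1 := Finset.card_union_le S (S.image Prod.swap)
    have h2 := Finset.card_image_le (s := S) (f := Prod.swap)
    rw [Finset.card_product, Finset.card_range, Finset.card_range]
    have : m ^ 2 * m = m ^ 3 := by ring
    omega
  obtain ⟨⟨i, j⟩, hx, ⟨i', j'⟩, hy, hne, hxy⟩ :=
    Finset.exists_ne_map_eq_of_card_lt_of_maps_to hcard (fun x hx => (hf x hx).1)
  obtain ⟨-, a1, a2⟩ := hf _ hx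
  obtain ⟨-, b1, b2⟩ := hf _ hy
  rw [← hxy] at b1 b2
  rw [Finset.mem_product, Finset.mem_range, Finset.mem_range] at hx hy
  simp only at hx hy a1 a2 b1 b2
  have hmm : m ≤ m ^ 2 := by nlinarith
  have c1 : chordLen (i * h) (i' * h) ≤ h / 2 := by
    have := cl_triangle (i * h) (f (i, j)).1 (i' * h)
    rw [cl_comm (f (i, j)).1 (i' * h)] at this
    linarith
  by_cases hi : i = i'
  · subst hi
    have hj : j ≠ j' := by
      rintro rfl; exact hne rfl
    have c2 : chordLen (i * h + π - j * h) (i * h + π - j' * h) ≤ h / 2 := by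
      have := cl_triangle (i * h + π - j * h) (f (i, j)).2 (i * h + π - j' * h)
      rw [cl_comm (i * h + π - j * h) (f (i, j)).2] at this
      linarith
    have := grid_sep m j' j (by omega) (by omega) h hh hj.symm
    have := cl_sep (i * h + π - j * h) (i * h + π - j' * h) h hh0
    rw [show (i * h + π - j * h) - (i * h + π - j' * h) = j' * h - j * h by ring] at this
    grind
  · have := grid_sep m i i' hx.1 hy.1 h hh hi
    have := cl_sep (i * h) (i' * h) h hh0 this.1 this.2
    linarith

theorem scale (x : ℝ) (h0 : 0 ≤ x) (h2 : x ≤ 2) (J : ℕ) :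
    ∃ m ≤ J, x ≤ 2 / 2 ^ m ∧ (m = J ∨ 1 / 2 ^ m ≤ x) := by
  induction J with
  | zero => exact ⟨0, le_rfl, by simpa using h2, Or.inl rfl⟩
  | succ J ih =>
    obtain ⟨m, hm, h3, h4⟩ := ih
    by_cases h5 : 1 / 2 ^ m ≤ x
    · exact ⟨m, by omega, h3, Or.inr h5⟩
    · have : m = J := by tauto
      subst this
      refine ⟨m + 1, le_rfl, ?_, Or.inl rfl⟩
      push Not at h5
      refine h5.le.trans (le_of_eq ?_)
      rw [pow_succ]; field_simp

/-- mesh width at level `m` -/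
noncomputable def msh (m : ℕ) : ℝ := 1 / (40 * 4 ^ m)

/-- chords at level `m` -/
noncomputable def lev (m : ℕ) : Finset (ℝ × ℝ) :=
  (Finset.range (280 * 4 ^ m + 1) ×ˢ Finset.range (80 * 2 ^ m + 1)).image
    (fun il : ℕ × ℕ => ((il.1 * msh m : ℝ), (il.1 * msh m + π - il.2 * msh m : ℝ)))

theorem lev_card (m : ℕ) : (lev m).card ≤ 22761 * 8 ^ m := by
  refine Finset.card_image_le.trans ?_
  rw [Finset.card_product, Finset.card_range, Finset.card_range]
  have h1 : 1 ≤ 4 ^ m := Nat.one_le_pow _ _ (by norm_num)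
  have h2 : 1 ≤ 2 ^ m := Nat.one_le_pow _ _ (by norm_num)
  calc (280 * 4 ^ m + 1) * (80 * 2 ^ m + 1) ≤ (281 * 4 ^ m) * (81 * 2 ^ m) := by
        apply Nat.mul_le_mul <;> omega
    _ = 22761 * (4 * 2) ^ m := by rw [mul_pow]; ring
    _ = _ := by norm_num

theorem four_pow (m : ℕ) : (4 : ℝ) ^ m = 2 ^ m * 2 ^ m := by
  rw [← mul_pow]; norm_num

theorem chord_val (a b : ℝ) (h0 : 0 ≤ b) (h2 : b ≤ 2) :
    chordLen a (a + π - b) = 2 * Real.cos (b / 2) ∧ 0 < Real.cos (b / 2) := by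
  have hp : 0 < Real.cos (b / 2) := by
    apply Real.cos_pos_of_mem_Ioo
    constructor <;> linarith [Real.pi_gt_three]
  refine ⟨?_, hp⟩
  rw [cl_eq, show (a - (a + π - b)) / 2 = -(π / 2 - b / 2) by ring,
    Real.sin_neg, abs_neg, Real.sin_pi_div_two_sub, abs_of_pos hp]

theorem lev_shortcut (m : ℕ) (s : ℝ × ℝ) (hs : s ∈ lev m) : IsShortcut s := by
  unfold lev at hs
  rw [Finset.mem_image] at hs
  obtain ⟨⟨i, l⟩, hil, rfl⟩ := hs
  rw [Finset.mem_product, Finset.mem_range, Finset.mem_range] at hil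
  have hl : (l : ℝ) ≤ 80 * 2 ^ m := by
    have : l ≤ 80 * 2 ^ m := by have := hil.2; simp only at this; omega
    exact_mod_cast this
  have hb : l * msh m ≤ 2 := by
    unfold msh
    have h2 : (1 : ℝ) ≤ 2 ^ m := one_le_pow₀ (by norm_num)
    rw [mul_one_div, div_le_iff₀ (by positivity), four_pow]
    nlinarith
  obtain ⟨h1, h2⟩ := chord_val (i * msh m) (l * msh m) (by unfold msh; positivity) hb
  intro h
  simp only at h
  unfold chordLen at h1
  rw [h] at h1
  simp at h1
  linarith

theorem lev_cover (J : ℕ) (p q x : ℝ) (n : ℤ) (h0 : 0 ≤ x) (h2 : x ≤ 2)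
    (hq : q = p + π - x + 2 * π * n) :
    ∃ m ≤ J, ∃ e ∈ lev m, arcDist p e.1 + chordLen e.1 e.2 + arcDist e.2 q ≤ 2 + 1 / 4 ^ J := by
  obtain ⟨m, hm, h3, h4⟩ := scale x h0 h2 J
  refine ⟨m, hm, ?_⟩
  have hpi := Real.pi_gt_three
  have hpi2 := Real.pi_lt_d2
  set k : ℤ := ⌊p / (2 * π)⌋ with hk
  set p0 := p - 2 * π * k with hp0
  have hk1 : 0 ≤ p0 := by
    have := Int.floor_le (p / (2 * π))
    rw [le_div_iff₀ (by positivity)] at this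
    rw [hp0]; linarith
  have hk2 : p0 ≤ 7 := by
    have := (Int.lt_floor_add_one (p / (2 * π))).le
    rw [div_le_iff₀ (by positivity)] at this
    rw [hp0]; linarith
  have hh0 : 0 < msh m := by unfold msh; positivity
  have hP : (1 : ℝ) ≤ 2 ^ m := one_le_pow₀ (by norm_num)
  set i := ⌊p0 / msh m⌋₊ with hi
  set l := ⌊x / msh m⌋₊ with hl
  have i1 : i * msh m ≤ p0 := by
    have := Nat.floor_le (a := p0 / msh m) (by positivity)
    rwa [le_div_iff₀ hh0] at this
  have i2 : p0 ≤ (i + 1) * msh m := by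
    have := (Nat.lt_floor_add_one (p0 / msh m)).le
    rwa [div_le_iff₀ hh0] at this
  have l1 : l * msh m ≤ x := by
    have := Nat.floor_le (a := x / msh m) (by positivity)
    rwa [le_div_iff₀ hh0] at this
  have l2 : x ≤ (l + 1) * msh m := by
    have := (Nat.lt_floor_add_one (x / msh m)).le
    rwa [div_le_iff₀ hh0] at this
  refine ⟨((i * msh m : ℝ), (i * msh m + π - l * msh m : ℝ)), ?_, ?_⟩
  · unfold lev
    rw [Finset.mem_image]
    refine ⟨(i, l), ?_, rfl⟩
    rw [Finset.mem_product, Finset.mem_range, Finset.mem_range]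
    constructor
    · apply Nat.lt_succ_of_le
      apply Nat.floor_le_of_le
      unfold msh
      rw [div_le_iff₀ (by positivity)]
      push_cast
      field_simp
      linarith
    · apply Nat.lt_succ_of_le
      apply Nat.floor_le_of_le
      unfold msh
      rw [div_le_iff₀ (by positivity)]
      push_cast
      refine h3.trans (le_of_eq ?_)
      rw [four_pow]
      field_simp
      norm_num
  · obtain ⟨c1, c2⟩ := chord_val (i * msh m) (l * msh m) (by positivity) (by linarith)
    simp only
    rw [c1]
    have d1 : arcDist p (i * msh m) ≤ msh m := by
      refine (ad_le p _ (-k)).trans ?_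
      rw [abs_le]; push_cast; constructor <;> linarith
    have d2 : arcDist (i * msh m + π - l * msh m) q ≤ 2 * msh m := by
      refine (ad_le _ _ (n + k)).trans ?_
      rw [abs_le, hq]; push_cast; constructor <;> linarith
    have hmJ : 0 < 1 / (4 : ℝ) ^ J := by positivity
    rcases h4 with h4 | h4
    · subst h4
      have := Real.cos_le_one (l * msh m / 2)
      have : 3 * msh m ≤ 1 / 4 ^ m := by
        unfold msh; field_simp; norm_num
      linarith
    · have hc := Real.cos_le_one_sub_mul_cos_sq (x := l * msh m / 2) (by
        rw [abs_of_nonneg (by positivity)]; linarith)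
      have h5 : 0.2 ≤ 2 / π ^ 2 := by
        rw [le_div_iff₀ (by positivity)]; nlinarith
      have hm2 : msh m = (1 / 2 ^ m) ^ 2 / 40 := by
        unfold msh; rw [four_pow]; field_simp
      have hr : (1 / 2 ^ m : ℝ) ≤ 1 := by
        rw [div_le_one (by positivity)]; exact hP
      have hr0 : (0 : ℝ) < 1 / 2 ^ m := by positivity
      set r : ℝ := 1 / 2 ^ m with hrd
      have hlow : 39 / 40 * r ≤ l * msh m := by nlinarith
      have hsq : 0.2 * (39 / 80 * r) ^ 2 ≤ 2 / π ^ 2 * (l * msh m / 2) ^ 2 := by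
        have : 39 / 80 * r ≤ l * msh m / 2 := by linarith
        gcongr
      norm_num at hsq
      nlinarith

theorem upper_aux (J : ℕ) (S : Finset (ℝ × ℝ)) (hS : ∀ m ≤ J, lev m ⊆ S) :
    diamS S ≤ 2 + 1 / 4 ^ J := by
  have hne : {d | ∃ p q : ℝ, d = dS S p q}.Nonempty := ⟨dS S 0 0, 0, 0, rfl⟩
  apply csSup_le hne
  rintro _ ⟨p, q, rfl⟩
  have hpos : 0 < 1 / (4 : ℝ) ^ J := by positivity
  by_cases hs : arcDist p q ≤ 2
  · linarith [dS_le_ad S p q]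
  push Not at hs
  obtain ⟨n, h1, h2⟩ := ad_exists p q
  have hpi := Real.pi_lt_d2
  norm_num at hpi
  rcases abs_cases (p - q + 2 * π * n) with ⟨h, -⟩ | ⟨h, -⟩
  · obtain ⟨m, hm, e, he, hc⟩ := lev_cover J q p (π - arcDist p q) (-n) (by linarith) (by linarith)
      (by push_cast; linarith)
    refine (dS_le S p q [(e.2, e.1)] (by simpa using Or.inr (hS m hm he))).trans ?_
    simp only [walkCost]
    rw [ad_comm p, ad_comm e.1, cl_comm e.2]
    linarith
  · obtain ⟨m, hm, e, he, hc⟩ := lev_cover J p q (π - arcDist p q) n (by linarith) (by linarith)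
      (by linarith)
    refine (dS_le S p q [e] (by simpa using Or.inl (hS m hm he))).trans ?_
    simp only [walkCost]
    linarith

/-- all chords up to level `J` -/
noncomputable def allLev (J : ℕ) : Finset (ℝ × ℝ) := (Finset.range (J + 1)).biUnion lev

theorem allLev_card (J : ℕ) : (allLev J).card ≤ 30000 * 8 ^ J := by
  refine Finset.card_biUnion_le.trans ?_
  refine (Finset.sum_le_sum (fun m _ => lev_card m)).trans ?_
  have : ∀ J : ℕ, 7 * ∑ m ∈ Finset.range (J + 1), 22761 * 8 ^ m ≤ 22761 * 8 ^ (J + 1) := by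
    intro J
    induction J with
    | zero => simp
    | succ J ih =>
      rw [Finset.sum_range_succ, pow_succ 8 (J + 1)]
      omega
  have := this J
  rw [pow_succ] at this
  omega

theorem pad (S : Finset (ℝ × ℝ)) (hS : ∀ s ∈ S, IsShortcut s) (k : ℕ) (hk : S.card ≤ k) :
    ∃ T : Finset (ℝ × ℝ), S ⊆ T ∧ T.card = k ∧ ∀ s ∈ T, IsShortcut s := by
  have hinf : {s | IsShortcut s}.Infinite := by
    apply Set.infinite_of_injective_forall_mem (f := fun n : ℕ => ((n : ℝ), (n : ℝ) + π - 0))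
    · intro a b h
      simpa using h
    · intro n h
      simp only at h
      obtain ⟨h1, h2⟩ := chord_val n 0 le_rfl (by norm_num)
      unfold chordLen at h1
      rw [h] at h1
      simp at h1
  induction k, hk using Nat.le_induction with
  | base => exact ⟨S, subset_rfl, rfl, hS⟩
  | succ k _ ih =>
    obtain ⟨T, h1, h2, h3⟩ := ih
    obtain ⟨a, ha, haT⟩ := hinf.exists_notMem_finset T
    refine ⟨insert a T, h1.trans (Finset.subset_insert _ _), ?_, ?_⟩
    · rw [Finset.card_insert_of_notMem haT, h2]
    · intro s hs
      rcases Finset.mem_insert.1 hs with h | h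
      · rw [h]; exact ha
      · exact h3 s h

theorem main_lower (k : ℕ) (hk : 1 ≤ k) :
    2 + (1 / 20000) * (k : ℝ) ^ (-(2 : ℝ) / 3) ≤ diamK k := by
  obtain ⟨T, -, h2, h3⟩ := pad ∅ (by simp) k (by simp)
  have hkR : (1 : ℝ) ≤ k := by exact_mod_cast hk
  have hk0 : (0 : ℝ) ≤ k := by linarith
  apply le_csInf
  · exact ⟨_, T, h2, h3, rfl⟩
  rintro _ ⟨S, hS, -, rfl⟩
  set r : ℝ := (k : ℝ) ^ ((1 : ℝ) / 3) with hr
  have hr1 : 1 ≤ r := Real.one_le_rpow hkR (by norm_num)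
  have hr3 : r ^ 3 = k := by
    rw [hr, ← Real.rpow_natCast, ← Real.rpow_mul hk0]; norm_num
  have ht : (k : ℝ) ^ (-(2 : ℝ) / 3) = 1 / r ^ 2 := by
    rw [hr, ← Real.rpow_natCast, ← Real.rpow_mul hk0, one_div, ← Real.rpow_neg hk0]; norm_num
  have hm1 : 2 * r ≤ ⌈2 * r⌉₊ := Nat.le_ceil _
  have hm2 : (⌈2 * r⌉₊ : ℝ) < 2 * r + 1 := Nat.ceil_lt_add_one (by linarith)
  have := lower S ⌈2 * r⌉₊ (by
    rw [hS]
    have : (2 * k : ℝ) < (⌈2 * r⌉₊ : ℝ) ^ 3 := by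
      have : (2 * r) ^ 3 ≤ (⌈2 * r⌉₊ : ℝ) ^ 3 := by gcongr
      rw [mul_pow, hr3] at this
      linarith
    exact_mod_cast this)
  refine le_trans ?_ this
  rw [ht, one_div_mul_one_div]
  have : 1296 * (⌈2 * r⌉₊ : ℝ) ^ 2 ≤ 20000 * r ^ 2 := by nlinarith
  have := one_div_le_one_div_of_le (by nlinarith) this
  linarith

theorem main_upper (k : ℕ) (hk : 30000 ≤ k) :
    diamK k ≤ 2 + 120000 * (k : ℝ) ^ (-(2 : ℝ) / 3) := by
  set J := Nat.log 8 (k / 30000) with hJ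
  have h1 : 8 ^ J ≤ k / 30000 := Nat.pow_log_le_self 8 (by omega)
  have h2 : k / 30000 < 8 ^ (J + 1) := Nat.lt_pow_succ_log_self (by norm_num) _
  have h1' : 30000 * 8 ^ J ≤ k := by omega
  have h2' : k ≤ 30000 * 8 ^ (J + 1) := by omega
  obtain ⟨T, ht1, ht2, ht3⟩ := pad (allLev J) (by
    intro s hs
    unfold allLev at hs
    rw [Finset.mem_biUnion] at hs
    obtain ⟨m, -, hm⟩ := hs
    exact lev_shortcut m s hm) k ((allLev_card J).trans h1')
  have hd : diamK k ≤ diamS T := by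
    apply csInf_le
    · refine ⟨0, ?_⟩
      rintro _ ⟨S, -, -, rfl⟩
      exact diamS_nonneg S
    · exact ⟨T, ht2, ht3, rfl⟩
  have hu := upper_aux J T (fun m hm => by
    refine Finset.Subset.trans ?_ ht1
    exact Finset.subset_biUnion_of_mem lev (Finset.mem_range.2 (by omega)))
  have hk0 : (0 : ℝ) < k := by
    have : 0 < k := by omega
    exact_mod_cast this
  have key : 1 / (4 : ℝ) ^ J ≤ 120000 * (k : ℝ) ^ (-(2 : ℝ) / 3) := by
    rw [← pow_le_pow_iff_left₀ (by positivity) (by positivity) (n := 3) (by norm_num)]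
    rw [mul_pow, ← Real.rpow_natCast ((k : ℝ) ^ _), ← Real.rpow_mul hk0.le]
    rw [show (-(2 : ℝ) / 3 * (3 : ℕ)) = -((2 : ℕ) : ℝ) by norm_num, Real.rpow_neg hk0.le,
      Real.rpow_natCast]
    have h3 : (k : ℝ) ≤ 30000 * 8 ^ (J + 1) := by exact_mod_cast h2'
    have h4 : (k : ℝ) ^ 2 ≤ (30000 * 8 ^ (J + 1)) ^ 2 := by gcongr
    have h5 : ((4 : ℝ) ^ J) ^ 3 = (8 ^ J) ^ 2 := by
      rw [← pow_mul, ← pow_mul, mul_comm J 3, mul_comm J 2, pow_mul, pow_mul]; norm_num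
    rw [div_pow, one_pow, h5, ← div_eq_mul_inv, div_le_div_iff₀ (by positivity) (by positivity),
      one_mul]
    refine h4.trans ?_
    have h6 : 0 ≤ ((8 : ℝ) ^ J) ^ 2 := by positivity
    rw [pow_succ 8 J, mul_pow, mul_pow]
    nlinarith
  linarith

/-- asymptotically `diam(k) = 2 + Θ(1/k^{2/3})`. -/
theorem stmt8 :
    ∃ c₁ c₂ : ℝ, 0 < c₁ ∧ 0 < c₂ ∧ ∃ k₀ : ℕ, ∀ k : ℕ, k₀ ≤ k →
      2 + c₁ * (k : ℝ) ^ (-(2 : ℝ) / 3) ≤ diamK k ∧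
      diamK k ≤ 2 + c₂ * (k : ℝ) ^ (-(2 : ℝ) / 3) := by
  refine ⟨1 / 20000, 120000, by norm_num, by norm_num, 30000, fun k hk => ⟨?_, ?_⟩⟩
  · exact main_lower k (by omega)
  · exact main_upper k hk
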